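/- (Stabilizer error-correction condition implies Knill–Laflamme.) Let S be a stabilizer group in the n-qubit Pauli group with codespace projector Π = |S|⁻¹ • Σ_{S ∈ S} S, and let {E_a}_{a ∈ A} be a family of elements of P_n such that for all a, b ∈ A, the operator E_aᴴ * E_b does not lie in N(S) \ ⟨i⟩S. Then for all a, b ∈ A there exists a scalar c_{ab} ∈ ℂ with Π * E_aᴴ * E_b * Π = c_{ab} • Π, i.e., the code can correct the error set {E_a}. -/

import Mathlib

/-!
Two facts about Pauli operators carry the proof: each is unitary (`pauli_conjTranspose`), so that
`Eₐᴴ * E_b` is again a Pauli operator `M`, and any two of them commute or anticommute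
(`pauli_comm_or_anticomm`). If `M` equals `i^λ • g` with `g ∈ S`, then `Π * M * Π = i^λ • Π`,
because `Π` absorbs the elements of `S` and is idempotent. Otherwise `M ∉ N(S)`, so `M`
anticommutes with some `g ∈ S`, and
`Π * M * Π = Π * g * M * Π = -(Π * M * g * Π) = -(Π * M * Π)`, whence `Π * M * Π = 0`.

The relations between the generators come from `actQ_mul_apply`, which describes left
multiplication by a single-qubit operator as a sum over the value of that qubit.
Finiteness of `S` need not be shown: for infinite `S` the factor `(Nat.card S)⁻¹` is `0`, so `Π = 0`.
-/

open Matrix Complex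
open scoped Classical

noncomputable section

/-- The space of `n`-qubit operators. -/
abbrev MatN (n : ℕ) : Type := Matrix (Fin n → Fin 2) (Fin n → Fin 2) ℂ

/-- The Pauli matrix `X`. -/
def PX : Matrix (Fin 2) (Fin 2) ℂ := !![0, 1; 1, 0]

/-- The Pauli matrix `Z`. -/
def PZ : Matrix (Fin 2) (Fin 2) ℂ := !![1, 0; 0, -1]

/-- The single-qubit operator `M` acting on the tensor factor `q` and as the identity on
all other factors. -/
def actQ {Q : Type*} (q : Q) (M : Matrix (Fin 2) (Fin 2) ℂ) :
    Matrix (Q → Fin 2) (Q → Fin 2) ℂ :=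
  fun v w => M (v q) (w q) * (if ∀ k, k ≠ q → v k = w k then 1 else 0)

/-- The Pauli `X` operator on the `j`-th qubit. -/
def Xop (n : ℕ) (j : Fin n) : MatN n := actQ j PX

/-- The Pauli `Z` operator on the `j`-th qubit. -/
def Zop (n : ℕ) (j : Fin n) : MatN n := actQ j PZ

/-- Generators of the Pauli group: `i • 1` and all `X_j`, `Z_j` (as units of the matrix ring). -/
def pauliGens (n : ℕ) : Set (MatN n)ˣ :=
  {u | (u : MatN n) = Complex.I • 1 ∨ (∃ j, (u : MatN n) = Xop n j) ∨
    ∃ j, (u : MatN n) = Zop n j}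

/-- The `n`-qubit Pauli group `P_n`: the subgroup of the units of the matrix ring generated by
`i • 1` together with all `X_j` and `Z_j`. -/
def PauliGroup (n : ℕ) : Subgroup (MatN n)ˣ := Subgroup.closure (pauliGens n)

/-- `X^a = ∏ⱼ X_j^(a_j)` for `a : Fin n → ZMod 2`. -/
def XpowVec (n : ℕ) (a : Fin n → ZMod 2) : MatN n :=
  (List.ofFn fun j => Xop n j ^ (a j).val).prod

/-- `Z^b = ∏ⱼ Z_j^(b_j)` for `b : Fin n → ZMod 2`. -/
def ZpowVec (n : ℕ) (b : Fin n → ZMod 2) : MatN n :=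
  (List.ofFn fun j => Zop n j ^ (b j).val).prod

/-- The codespace projector `Π = |S|⁻¹ • Σ_{g ∈ S} g`. -/
def codeProj (n : ℕ) (S : Subgroup (MatN n)ˣ) : MatN n :=
  (Nat.card ↥S : ℂ)⁻¹ • ∑ᶠ g ∈ (S : Set (MatN n)ˣ), (g : MatN n)

/-- The set `⟨i⟩S = {i^λ • S | λ ∈ ZMod 4, S ∈ S}` of stabilizers up to phase. -/
def phaseStab (n : ℕ) (S : Subgroup (MatN n)ˣ) : Set (MatN n) :=
  {M | ∃ lam : ZMod 4, ∃ g ∈ S, M = Complex.I ^ lam.val • ((g : (MatN n)ˣ) : MatN n)}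

/-- The centralizer `N(S)` of the stabilizer group `S` in the Pauli group `P_n`,
as a set of matrices. -/
def NSmat (n : ℕ) (S : Subgroup (MatN n)ˣ) : Set (MatN n) :=
  {M | (∃ u ∈ PauliGroup n, (u : MatN n) = M) ∧
    ∀ g ∈ S, M * (g : MatN n) = (g : MatN n) * M}

/-- Left multiplication by a single-qubit operator only sums over the value of that qubit. -/
lemma actQ_mul_apply {n : ℕ} (q : Fin n) (M : Matrix (Fin 2) (Fin 2) ℂ) (B : MatN n)
    (v w : Fin n → Fin 2) :
    (actQ q M * B) v w = ∑ a, M (v q) a * B (Function.update v q a) w := by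
  rw [Matrix.mul_apply]
  symm
  refine Finset.sum_of_injOn (fun a => Function.update v q a) ?_ ?_ ?_ ?_
  · intro a _ b _ h
    simpa using congrFun h q
  · intro a _
    simp
  · intro u _ hu
    have h : ¬ ∀ k, k ≠ q → v k = u k := by
      intro h
      refine hu ⟨u q, by simp, ?_⟩
      funext k
      by_cases hk : k = q
      · subst hk; simp
      · simp [hk, h k hk]
    simp only [actQ, if_neg h, mul_zero, zero_mul]
  · intro a _
    have h : ∀ k, k ≠ q → v k = Function.update v q a k := by
      intro k hk
      simp [hk]
    simp only [actQ, if_pos h, mul_one, Function.update_self]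

lemma actQ_mul_same {n : ℕ} (q : Fin n) (M N : Matrix (Fin 2) (Fin 2) ℂ) :
    (actQ q M * actQ q N : MatN n) = actQ q (M * N) := by
  ext v w
  rw [← mul_one (actQ q (M * N)), ← mul_one (actQ q N), actQ_mul_apply, actQ_mul_apply]
  rw [Fin.sum_univ_two, actQ_mul_apply, actQ_mul_apply]
  simp only [Fin.sum_univ_two, Function.update_self]
  rw [Function.update_idem, Function.update_idem, Function.update_idem, Function.update_idem,
    Matrix.mul_apply, Matrix.mul_apply, Fin.sum_univ_two, Fin.sum_univ_two]
  ring

lemma actQ_mul_comm_of_ne {n : ℕ} {q r : Fin n} (h : q ≠ r) (M N : Matrix (Fin 2) (Fin 2) ℂ) :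
    (actQ q M * actQ r N : MatN n) = actQ r N * actQ q M := by
  ext v w
  rw [← mul_one (actQ q M * actQ r N), ← mul_one (actQ r N * actQ q M), mul_assoc, mul_assoc,
    actQ_mul_apply, actQ_mul_apply]
  simp only [actQ_mul_apply, Fin.sum_univ_two, Function.update_of_ne h,
    Function.update_of_ne h.symm]
  rw [Function.update_comm h 0 0, Function.update_comm h 0 1, Function.update_comm h 1 0,
    Function.update_comm h 1 1]
  ring

lemma actQ_one {n : ℕ} (q : Fin n) : (actQ q 1 : MatN n) = 1 := by
  ext v w
  rw [← mul_one (actQ q 1), actQ_mul_apply, Finset.sum_eq_single (v q)]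
  · rw [Function.update_eq_self, Matrix.one_apply_eq, one_mul]
  · intro b _ hb
    simp [Matrix.one_apply_ne hb.symm]
  · simp

lemma actQ_neg {n : ℕ} (q : Fin n) (M : Matrix (Fin 2) (Fin 2) ℂ) :
    (actQ q (-M) : MatN n) = -actQ q M := by
  ext v w
  simp only [actQ, Matrix.neg_apply, neg_mul]

lemma actQ_conjTranspose {n : ℕ} (q : Fin n) (M : Matrix (Fin 2) (Fin 2) ℂ) :
    (actQ q M : MatN n)ᴴ = actQ q Mᴴ := by
  ext v w
  simp only [actQ, Matrix.conjTranspose_apply, star_mul', apply_ite star, star_one, star_zero,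
    @eq_comm _ (w _)]
  congr

lemma PX_conjTranspose_mul : PXᴴ * PX = 1 := by
  ext i j; fin_cases i <;> fin_cases j <;> simp [PX, Matrix.mul_apply]

lemma PZ_conjTranspose_mul : PZᴴ * PZ = 1 := by
  ext i j; fin_cases i <;> fin_cases j <;> simp [PZ, Matrix.mul_apply]

lemma PX_mul_PZ : PX * PZ = -(PZ * PX) := by
  ext i j; fin_cases i <;> fin_cases j <;> simp [PX, PZ, Matrix.mul_apply]

lemma Xop_mul_Zop (n : ℕ) (j k : Fin n) :
    Xop n j * Zop n k = Zop n k * Xop n j ∨ Xop n j * Zop n k = -(Zop n k * Xop n j) := by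
  by_cases h : j = k
  · subst h
    right
    simp only [Xop, Zop, actQ_mul_same, PX_mul_PZ, actQ_neg]
  · exact Or.inl (actQ_mul_comm_of_ne h _ _)

lemma actQ_comm_of_same (n : ℕ) (j k : Fin n) (M : Matrix (Fin 2) (Fin 2) ℂ) :
    (actQ j M * actQ k M : MatN n) = actQ k M * actQ j M := by
  by_cases h : j = k
  · rw [h]
  · exact actQ_mul_comm_of_ne h _ _

lemma pauliGens_comm_or_anticomm {n : ℕ} {u v : (MatN n)ˣ} (hu : u ∈ pauliGens n)
    (hv : v ∈ pauliGens n) : u * v = v * u ∨ u * v = -(v * u) := by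
  simp only [Units.ext_iff, Units.val_neg, Units.val_mul]
  rcases hu with hu | ⟨j, hu⟩ | ⟨j, hu⟩
  · left; simp [hu]
  all_goals
    rcases hv with hv | ⟨k, hv⟩ | ⟨k, hv⟩
    · left; simp [hv]
    all_goals rw [hu, hv]
  · exact Or.inl (actQ_comm_of_same n j k PX)
  · exact Xop_mul_Zop n j k
  · rcases Xop_mul_Zop n k j with h | h
    · exact Or.inl h.symm
    · right; rw [h, neg_neg]
  · exact Or.inl (actQ_comm_of_same n j k PZ)

/-- In the units of a ring, the elements commuting with `u` up to sign are closed under the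
group operations, so the relation extends from a generating set to the whole group. -/
lemma comm_or_anticomm_of_closure {R : Type*} [Ring R] {s : Set Rˣ} {u : Rˣ}
    (h : ∀ v ∈ s, u * v = v * u ∨ u * v = -(v * u)) {v : Rˣ} (hv : v ∈ Subgroup.closure s) :
    u * v = v * u ∨ u * v = -(v * u) := by
  induction hv using Subgroup.closure_induction with
  | mem v hv => exact h v hv
  | one => simp
  | mul x y _ _ hx hy =>
    rw [← mul_assoc]
    rcases hx with hx | hx <;> rcases hy with hy | hy <;> simp [hx, hy, mul_assoc]
  | inv x _ hx =>
    rcases hx with hx | hx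
    · left
      rw [eq_inv_mul_iff_mul_eq, ← mul_assoc, ← hx, mul_inv_cancel_right]
    · right
      have hx' : x * u = -(u * x) := by rw [hx, neg_neg]
      rw [← mul_neg, eq_inv_mul_iff_mul_eq, ← mul_assoc, hx', neg_mul, mul_inv_cancel_right]

lemma pauli_comm_or_anticomm {n : ℕ} {u v : (MatN n)ˣ} (hu : u ∈ PauliGroup n)
    (hv : v ∈ PauliGroup n) : u * v = v * u ∨ u * v = -(v * u) := by
  refine comm_or_anticomm_of_closure (fun w hw => ?_) hv
  have h := comm_or_anticomm_of_closure (u := w)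
    (fun x hx => pauliGens_comm_or_anticomm hw hx) hu
  rcases h with h | h
  · exact Or.inl h.symm
  · right; rw [h, neg_neg]

/-- Pauli operators are unitary. -/
lemma pauli_conjTranspose {n : ℕ} {u : (MatN n)ˣ} (hu : u ∈ PauliGroup n) :
    (u : MatN n)ᴴ = ((u⁻¹ : (MatN n)ˣ) : MatN n) := by
  suffices h : star u = u⁻¹ by rw [← h]; rfl
  induction hu using Subgroup.closure_induction with
  | mem u hu =>
    rw [eq_inv_iff_mul_eq_one, Units.ext_iff, Units.val_mul, Units.coe_star,
      Matrix.star_eq_conjTranspose, Units.val_one]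
    rcases hu with hu | ⟨j, hu⟩ | ⟨j, hu⟩ <;> rw [hu]
    · simp [Matrix.conjTranspose_smul, smul_smul]
    · rw [Xop, actQ_conjTranspose, actQ_mul_same, PX_conjTranspose_mul, actQ_one]
    · rw [Zop, actQ_conjTranspose, actQ_mul_same, PZ_conjTranspose_mul, actQ_one]
  | one => simp
  | mul x y _ _ hx hy => rw [star_mul, hx, hy, _root_.mul_inv_rev]
  | inv x _ hx => rw [star_inv, hx]

lemma codeProj_eq_sum (n : ℕ) (S : Subgroup (MatN n)ˣ) [Fintype S] :
    codeProj n S = (Nat.card S : ℂ)⁻¹ • ∑ g : S, ((g : (MatN n)ˣ) : MatN n) := by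
  rw [codeProj, ← finsum_set_coe_eq_finsum_mem, ← finsum_eq_sum_of_fintype]
  rfl

lemma mul_codeProj {n : ℕ} {S : Subgroup (MatN n)ˣ} [Finite S] {g : (MatN n)ˣ} (hg : g ∈ S) :
    (g : MatN n) * codeProj n S = codeProj n S := by
  have := Fintype.ofFinite S
  rw [codeProj_eq_sum, mul_smul_comm, Finset.mul_sum]
  congr 1
  exact Fintype.sum_equiv (Equiv.mulLeft (⟨g, hg⟩ : S)) _ _ (fun x => by simp)

lemma codeProj_mul {n : ℕ} {S : Subgroup (MatN n)ˣ} [Finite S] {g : (MatN n)ˣ} (hg : g ∈ S) :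
    codeProj n S * (g : MatN n) = codeProj n S := by
  have := Fintype.ofFinite S
  rw [codeProj_eq_sum, smul_mul_assoc, Finset.sum_mul]
  congr 1
  exact Fintype.sum_equiv (Equiv.mulRight (⟨g, hg⟩ : S)) _ _ (fun x => by simp)

lemma codeProj_mul_self {n : ℕ} (S : Subgroup (MatN n)ˣ) [Finite S] :
    codeProj n S * codeProj n S = codeProj n S := by
  have := Fintype.ofFinite S
  have hc : (Nat.card S : ℂ) ≠ 0 := Nat.cast_ne_zero.2 Nat.card_pos.ne'
  conv_lhs => arg 1; rw [codeProj_eq_sum]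
  rw [smul_mul_assoc, Finset.sum_mul, Finset.sum_congr rfl (fun x _ => mul_codeProj x.2),
    Finset.sum_const, Finset.card_univ, ← Nat.card_eq_fintype_card, ← Nat.cast_smul_eq_nsmul ℂ,
    smul_smul, inv_mul_cancel₀ hc, one_smul]

/-- Stabilizer error-correction condition implies Knill–Laflamme: if for all `a, b` the
operator `Eₐᴴ * E_b` does not lie in `N(S) \ ⟨i⟩S`, then `Π * Eₐᴴ * E_b * Π = c_{ab} • Π`
for some scalar `c_{ab}`, i.e. the code can correct the error set `{Eₐ}`. -/
theorem stabilizer_knill_laflamme (n : ℕ) (hn : 1 ≤ n)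
    (S : Subgroup (MatN n)ˣ) (hS : S ≤ PauliGroup n)
    (habel : ∀ a ∈ S, ∀ b ∈ S, a * b = b * a)
    (hneg : (-1 : (MatN n)ˣ) ∉ S)
    {A : Type*} (E : A → (MatN n)ˣ) (hE : ∀ a, E a ∈ PauliGroup n)
    (hcond : ∀ a b : A,
      ((E a : MatN n))ᴴ * (E b : MatN n) ∉ NSmat n S \ phaseStab n S) :
    ∀ a b : A, ∃ c : ℂ,
      codeProj n S * (((E a : MatN n))ᴴ * (E b : MatN n)) * codeProj n S =
        c • codeProj n S := by
  intro a b
  -- For infinite `S`, `Nat.card S = 0`, so `codeProj n S = 0`.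
  rcases finite_or_infinite S with hfin | hinf
  swap
  · exact ⟨0, by simp [codeProj]⟩
  have hM : ((E a : MatN n))ᴴ * (E b : MatN n) = (((E a)⁻¹ * E b : (MatN n)ˣ) : MatN n) := by
    rw [pauli_conjTranspose (hE a), Units.val_mul]
  have hcond' := hcond a b
  rw [hM] at hcond' ⊢
  have hP := mul_mem (inv_mem (hE a)) (hE b)
  generalize (E a)⁻¹ * E b = M at hP hcond'
  by_cases hph : (M : MatN n) ∈ phaseStab n S
  · obtain ⟨lam, g, hg, h⟩ := hph
    refine ⟨Complex.I ^ lam.val, ?_⟩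
    rw [h, mul_smul_comm, codeProj_mul hg, smul_mul_assoc, codeProj_mul_self]
  · have hN : (M : MatN n) ∉ NSmat n S := fun h => hcond' ⟨h, hph⟩
    have hex : ∃ g ∈ S, (M : MatN n) * (g : MatN n) ≠ (g : MatN n) * (M : MatN n) := by
      by_contra! h
      exact hN ⟨⟨M, hP, rfl⟩, h⟩
    obtain ⟨g, hg, hne⟩ := hex
    have hanti : (M : MatN n) * (g : MatN n) = -((g : MatN n) * (M : MatN n)) := by
      rcases pauli_comm_or_anticomm hP (hS hg) with h | h
      · exact absurd (by simpa using congrArg Units.val h) hne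
      · simpa using congrArg Units.val h
    refine ⟨0, ?_⟩
    have : IsAddTorsionFree (MatN n) :=
      inferInstanceAs (IsAddTorsionFree ((Fin n → Fin 2) → (Fin n → Fin 2) → ℂ))
    rw [zero_smul, ← self_eq_neg]
    calc codeProj n S * (M : MatN n) * codeProj n S
        = codeProj n S * (M : MatN n) * ((g : MatN n) * codeProj n S) := by rw [mul_codeProj hg]
      _ = codeProj n S * ((M : MatN n) * (g : MatN n)) * codeProj n S := by simp only [mul_assoc]
      _ = -(codeProj n S * (g : MatN n) * (M : MatN n) * codeProj n S) := by
        rw [hanti]; simp only [mul_assoc, neg_mul, mul_neg]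
      _ = -(codeProj n S * (M : MatN n) * codeProj n S) := by rw [codeProj_mul hg]
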